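/- Let k ≥ 0 and let K ⊆ ℝ³ be a nonempty bounded open set, with d_j = C(j+3,3). Then dim curl(P_k³) + dim { r ∈ P_k³ : ∫_K r·(curl v) dx = 0 for all v ∈ P_{k+1}³ } + dim { v ∈ P_{k+1}³ : ∫_K v·w dx = 0 for all w ∈ P_k³ + grad(𝒫̃_{k+2}) } = 3·d_k; that is, the linear system defining the curl+ projection of Section 3 of the paper is a square system on P_k³. -/

import Mathlib

open MvPolynomial MeasureTheory

/-- The `i`-th partial derivative as a linear map on polynomials in three variables. -/
noncomputable def pd (i : Fin 3) : MvPolynomial (Fin 3) ℝ →ₗ[ℝ] MvPolynomial (Fin 3) ℝ :=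
  (pderiv i).toLinearMap

/-- The gradient of a polynomial, `grad p = (∂₁p, ∂₂p, ∂₃p)`, as a linear map. -/
noncomputable def gradLM : MvPolynomial (Fin 3) ℝ →ₗ[ℝ] (Fin 3 → MvPolynomial (Fin 3) ℝ) :=
  LinearMap.pi fun i => pd i

/-- The curl of a polynomial vector field,
`curl F = (∂₂F₃ − ∂₃F₂, ∂₃F₁ − ∂₁F₃, ∂₁F₂ − ∂₂F₁)`, as a linear map. -/
noncomputable def curlLM : (Fin 3 → MvPolynomial (Fin 3) ℝ) →ₗ[ℝ] (Fin 3 → MvPolynomial (Fin 3) ℝ) :=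
  LinearMap.pi
    ![pd 1 ∘ₗ LinearMap.proj 2 - pd 2 ∘ₗ LinearMap.proj 1,
      pd 2 ∘ₗ LinearMap.proj 0 - pd 0 ∘ₗ LinearMap.proj 2,
      pd 0 ∘ₗ LinearMap.proj 1 - pd 1 ∘ₗ LinearMap.proj 0]

/-- `P_k³`: vector fields whose three components are polynomials of total degree ≤ k. -/
noncomputable def Pvec (k : ℕ) : Submodule ℝ (Fin 3 → MvPolynomial (Fin 3) ℝ) :=
  Submodule.pi Set.univ fun _ => restrictTotalDegree (Fin 3) ℝ k

/-- The `L²(K)` inner product `(F,G)_K = ∫_K F·G dx` of two polynomial vector fields. -/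
noncomputable def ipK (K : Set (Fin 3 → ℝ)) (F G : Fin 3 → MvPolynomial (Fin 3) ℝ) : ℝ :=
  ∫ x in K, ∑ i : Fin 3, eval x (F i) * eval x (G i)

/-!
Write `W = P_k³ + grad 𝒫̃_{k+2}`, so that `P_k³ ⊆ W ⊆ P_{k+1}³`. Adding gradients does not change
the image of the curl, so `curl W = curl P_k³`. By Euler's identity, a homogeneous curl-free field
`h` of degree `k + 1` is the gradient of `(k + 2)⁻¹ ∑ xᵢ hᵢ`, and therefore `W` contains every
curl-free field in `P_{k+1}³`. Rank–nullity for the curl on `W` and on `P_{k+1}³` thus involves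
the same kernel, and gives `dim P_{k+1}³ - dim W = dim curl P_{k+1}³ - dim curl P_k³`. Since the
`L²(K)` product is definite, the two orthogonal complements have dimensions
`dim P_k³ - dim curl P_{k+1}³` and `dim P_{k+1}³ - dim W`, and everything cancels down to
`dim P_k³`.
-/

section LinearAlgebra

variable {F E E' : Type*} [Field F] [AddCommGroup E] [Module F E] [AddCommGroup E'] [Module F E']

lemma finrank_map_add_finrank_inf_ker (f : E →ₗ[F] E') (V : Submodule F E)
    [FiniteDimensional F V] :
    Module.finrank F (V.map f) + Module.finrank F (V ⊓ f.ker : Submodule F E)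
      = Module.finrank F V := by
  rw [← LinearMap.range_domRestrict,
    ← (Submodule.comapSubtypeEquivOfLe (inf_le_left : V ⊓ f.ker ≤ V)).finrank_eq,
    Submodule.comap_inf, Submodule.comap_subtype_self, top_inf_eq, ← LinearMap.ker_domRestrict]
  exact (f.domRestrict V).finrank_range_add_finrank_ker

lemma finrank_add_finrank_inf_orthogonal {B : LinearMap.BilinForm F E}
    (hB : ∀ x, B x x = 0 → x = 0) {A V : Submodule F E} [FiniteDimensional F V] (hAV : A ≤ V) :
    Module.finrank F A + Module.finrank F (V ⊓ B.orthogonal A : Submodule F E)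
      = Module.finrank F V := by
  have ker_eq_bot : (B.restrict V).ker = ⊥ :=
    (Submodule.eq_bot_iff _).mpr fun x hx =>
      Subtype.ext (hB x (LinearMap.congr_fun (LinearMap.mem_ker.mp hx) x))
  have orthogonal_eq : (B.restrict V).orthogonal (A.comap V.subtype)
      = (V ⊓ B.orthogonal A).comap V.subtype := by
    ext x
    exact ⟨fun hx => ⟨x.2, fun a ha => hx ⟨a, hAV ha⟩ ha⟩, fun hx a ha => hx.2 a ha⟩
  rw [← (Submodule.comapSubtypeEquivOfLe hAV).finrank_eq,
    ← (Submodule.comapSubtypeEquivOfLe (inf_le_left : V ⊓ B.orthogonal A ≤ V)).finrank_eq,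
    ← orthogonal_eq, LinearMap.BilinForm.finrank_add_finrank_orthogonal', ker_eq_bot, inf_bot_eq,
    finrank_bot, add_zero]

lemma finrank_map_add_finrank_inf_orthogonal_map_add {B : LinearMap.BilinForm F E}
    (hB : ∀ x, B x x = 0 → x = 0) {f : E →ₗ[F] E} {V V' W : Submodule F E}
    [FiniteDimensional F V] [FiniteDimensional F V'] (hmap : V'.map f ≤ V) (hWV' : W ≤ V')
    (hker : V' ⊓ f.ker ≤ W) :
    Module.finrank F (W.map f) + Module.finrank F (V ⊓ B.orthogonal (V'.map f) : Submodule F E)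
        + Module.finrank F (V' ⊓ B.orthogonal W : Submodule F E)
      = Module.finrank F V := by
  have : FiniteDimensional F W := Submodule.finiteDimensional_of_le hWV'
  have ker_inf_eq : W ⊓ f.ker = V' ⊓ f.ker :=
    le_antisymm (inf_le_inf_right _ hWV') (le_inf hker inf_le_right)
  have rank_W := finrank_map_add_finrank_inf_ker f W
  have rank_V' := finrank_map_add_finrank_inf_ker f V'
  have compl_map := finrank_add_finrank_inf_orthogonal hB hmap
  have compl_W := finrank_add_finrank_inf_orthogonal hB hWV'
  rw [ker_inf_eq] at rank_W
  omega

variable (ι : Type*) [Fintype ι] (V : Submodule F E)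

/-- Functions into `V` as vector fields with all components in `V`, which carries dimension counts
for `ι → V` over to the submodule `Submodule.pi`. -/
noncomputable def piConstEquiv : (ι → V) ≃ₗ[F] Submodule.pi Set.univ fun _ : ι => V :=
  (LinearEquiv.ofInjective (V.subtype.compLeft ι) V.injective_subtype.comp_left).trans
    (LinearEquiv.ofEq _ _ (by rw [LinearMap.range_compLeft, Submodule.range_subtype]))

lemma finrank_pi_const [FiniteDimensional F V] :
    Module.finrank F (Submodule.pi Set.univ fun _ : ι => V)
      = Fintype.card ι * Module.finrank F V := by
  rw [← (piConstEquiv ι V).finrank_eq, Module.finrank_pi_fintype, Finset.sum_const,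
    Finset.card_univ, smul_eq_mul]

end LinearAlgebra

section Polynomials

variable {σ R : Type*}

lemma finrank_restrictTotalDegree [Fintype σ] [CommRing R] [StrongRankCondition R] (n : ℕ) :
    Module.finrank R (restrictTotalDegree σ R n)
      = (n + Fintype.card σ).choose (Fintype.card σ) := by
  classical
  have exponents_eq : {m : σ →₀ ℕ | (m.sum fun _ e => e) ≤ n}
      = (Finset.range (n + 1)).biUnion fun j =>
          Finset.finsuppAntidiag (Finset.univ : Finset σ) j := by
    ext m
    simp [Finset.mem_finsuppAntidiag, Finsupp.sum_fintype]
  have antidiag_disjoint : (Finset.range (n + 1) : Set ℕ).PairwiseDisjoint fun j =>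
      Finset.finsuppAntidiag (Finset.univ : Finset σ) j := by
    intro i _ j _ hij
    refine Finset.disjoint_left.mpr fun m hi hj => hij ?_
    rw [← (Finset.mem_finsuppAntidiag.mp hi).1, (Finset.mem_finsuppAntidiag.mp hj).1]
  rw [restrictTotalDegree, exponents_eq,
    Module.finrank_eq_nat_card_basis (basisRestrictSupport R _), Nat.card_coe_set_eq,
    Set.ncard_coe_finset, Finset.card_biUnion antidiag_disjoint]
  simp only [Finset.card_finsuppAntidiag_nat_eq_multichoose, Finset.card_univ,
    Nat.sum_range_multichoose]

lemma pderiv_comm [CommSemiring R] (i j : σ) (p : MvPolynomial σ R) :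
    pderiv i (pderiv j p) = pderiv j (pderiv i p) := by
  classical
  ext m
  simp only [coeff_pderiv, add_right_comm m]
  by_cases hij : i = j
  · rw [hij]
  · simp [hij, Ne.symm hij, mul_right_comm]

lemma pderiv_homogeneousComponent_succ [CommSemiring R] (i : σ) (n : ℕ) (p : MvPolynomial σ R) :
    pderiv i (homogeneousComponent (n + 1) p) = homogeneousComponent n (pderiv i p) := by
  ext m
  simp only [coeff_pderiv, coeff_homogeneousComponent, map_add, Finsupp.degree_single,
    Nat.add_right_cancel_iff, ite_mul, zero_mul]

lemma totalDegree_pderiv_le [CommSemiring R] (i : σ) (p : MvPolynomial σ R) :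
    (pderiv i p).totalDegree ≤ p.totalDegree - 1 := by
  refine Finset.sup_le fun m hm => Nat.le_sub_one_of_lt ?_
  have hmem : m + Finsupp.single i 1 ∈ p.support := by
    rw [mem_support_iff, coeff_pderiv] at hm
    exact mem_support_iff.mpr (left_ne_zero_of_mul hm)
  have hle := le_totalDegree hmem
  rwa [Finsupp.sum_add_index' (fun _ => rfl) (fun _ _ _ => rfl),
    Finsupp.sum_single_index rfl] at hle

lemma totalDegree_sub_homogeneousComponent_le [CommRing R] {n : ℕ} {p : MvPolynomial σ R}
    (hp : p.totalDegree ≤ n + 1) : (p - homogeneousComponent (n + 1) p).totalDegree ≤ n := by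
  refine Finset.sup_le fun m hm => ?_
  rw [mem_support_iff, coeff_sub, coeff_homogeneousComponent] at hm
  have hdeg : m.degree ≠ n + 1 := fun h => hm (by rw [if_pos h, sub_self])
  rw [if_neg hdeg, sub_zero] at hm
  have hle : m.degree ≤ n + 1 := (le_totalDegree (mem_support_iff.mpr hm)).trans hp
  exact Nat.le_of_lt_succ (lt_of_le_of_ne hle hdeg)

lemma pderiv_sum_X_mul_of_pderiv_symm [Fintype σ] [CommSemiring R] {n : ℕ}
    {h : σ → MvPolynomial σ R} (hh : ∀ i, (h i).IsHomogeneous n)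
    (hsymm : ∀ i j, pderiv i (h j) = pderiv j (h i)) (j : σ) :
    pderiv j (∑ i, X i * h i) = (n + 1) • h j := by
  classical
  calc pderiv j (∑ i, X i * h i)
      = ∑ i, (Pi.single (M := fun _ => MvPolynomial σ R) j 1 i * h i + X i * pderiv i (h j)) := by
        simp only [map_sum, pderiv_mul, pderiv_X, hsymm j, Pi.single_comm j]
    _ = h j + n • h j := by
        rw [Finset.sum_add_distrib, (hh j).sum_X_mul_pderiv]
        simp only [Pi.single_apply, ite_mul, one_mul, zero_mul, Finset.sum_ite_eq',
          Finset.mem_univ, if_true]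
    _ = (n + 1) • h j := (succ_nsmul' _ _).symm

end Polynomials

section Integration

lemma integrableOn_eval {σ : Type*} [Fintype σ] {K : Set (σ → ℝ)} (hK : Bornology.IsBounded K)
    (p : MvPolynomial σ ℝ) : IntegrableOn (fun x => eval x p) K :=
  ((continuous_eval p).continuousOn.integrableOn_compact hK.isCompact_closure).mono_set
    subset_closure

lemma finite_setOf_eval_add_smul_eq_zero {σ R : Type*} [CommRing R] [IsDomain R]
    {p : MvPolynomial σ R} {a : σ → R} (ha : eval a p ≠ 0) (v : σ → R) :
    {t : R | eval (a + t • v) p = 0}.Finite := by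
  let q : Polynomial R := aeval (fun i => Polynomial.C (a i) + Polynomial.X * Polynomial.C (v i)) p
  have eval_q (t : R) : q.eval t = eval (a + t • v) p := by
    have eval_comp : ((Polynomial.aeval t).comp (aeval fun i => Polynomial.C (a i) +
        Polynomial.X * Polynomial.C (v i))) = aeval (R := R) (a + t • v) := by
      ext i
      simp [mul_comm t]
    exact DFunLike.congr_fun eval_comp p
  have hq : q ≠ 0 := fun h => ha (by simpa [h] using (eval_q 0).symm)
  simp only [← eval_q]
  exact Polynomial.finite_setOfPred_isRoot hq

/-- Fubini on pairs `(x, t)`: each line `t ↦ a + t x` through a point `a` with `p a ≠ 0` meets the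
zero set of `p` finitely often, so for some `t ≠ 0` the zero set of `x ↦ p (a + t x)` is null. -/
lemma ae_eval_ne_zero {σ : Type*} [Fintype σ] {p : MvPolynomial σ ℝ} (hp : p ≠ 0) :
    ∀ᵐ x : σ → ℝ, eval x p ≠ 0 := by
  obtain ⟨a, ha⟩ : ∃ a, eval a p ≠ 0 := by
    contrapose! hp
    exact MvPolynomial.funext fun x => by rw [hp x, map_zero]
  have ae_line (x : σ → ℝ) : ∀ᵐ t : ℝ, eval (a + t • x) p ≠ 0 :=
    measure_eq_zero_iff_ae_notMem.mp ((finite_setOf_eval_add_smul_eq_zero ha x).measure_zero _)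
  have measurableSet_ne :
      MeasurableSet {z : (σ → ℝ) × ℝ | eval (a + z.2 • z.1) p ≠ 0} := by
    have : Continuous fun z : (σ → ℝ) × ℝ => eval (a + z.2 • z.1) p :=
      (continuous_eval p).comp (by fun_prop)
    exact (isOpen_ne_fun this continuous_const).measurableSet
  have ae_swap : ∀ᵐ t : ℝ, ∀ᵐ x : σ → ℝ, eval (a + t • x) p ≠ 0 :=
    (Measure.ae_ae_comm measurableSet_ne).mp (Filter.Eventually.of_forall ae_line)
  obtain ⟨t, ht, ht0⟩ := (ae_swap.and (Measure.ae_ne volume 0)).exists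
  have homothety := (Measure.quasiMeasurePreserving_smul volume (inv_ne_zero ht0)).comp
    (measurePreserving_sub_right (volume : Measure (σ → ℝ)) a).quasiMeasurePreserving
  filter_upwards [homothety.ae ht] with x hx
  simpa [smul_inv_smul₀ ht0] using hx

lemma eval_dotProduct {σ ι R : Type*} [Fintype ι] [CommSemiring R] (x : σ → R)
    (u v : ι → MvPolynomial σ R) : eval x (u ⬝ᵥ v) = ∑ i, eval x (u i) * eval x (v i) := by
  simp only [dotProduct, map_sum, map_mul]

variable {K : Set (Fin 3 → ℝ)}

/-- The `L²(K)` product as a bilinear form, for `K` with finite moments: the dot product of the two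
fields followed by integration over `K`. -/
noncomputable def ipForm (hK : ∀ p : MvPolynomial (Fin 3) ℝ, IntegrableOn (fun x => eval x p) K) :
    LinearMap.BilinForm ℝ (Fin 3 → MvPolynomial (Fin 3) ℝ) :=
  (dotProductBilin ℝ ℝ).compr₂
    { toFun := fun p => ∫ x in K, eval x p
      map_add' := fun p q => by simp only [map_add, integral_add (hK p) (hK q)]
      map_smul' := fun c p => by
        simp only [smul_eval, integral_const_mul, RingHom.id_apply, smul_eq_mul] }

lemma ipForm_apply (hK : ∀ p : MvPolynomial (Fin 3) ℝ, IntegrableOn (fun x => eval x p) K)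
    (u v : Fin 3 → MvPolynomial (Fin 3) ℝ) : ipForm hK u v = ipK K u v := by
  change ∫ x in K, eval x (u ⬝ᵥ v) = _
  simp only [eval_dotProduct, ipK]

lemma ipK_comm (u v : Fin 3 → MvPolynomial (Fin 3) ℝ) : ipK K u v = ipK K v u := by
  simp only [ipK, mul_comm]

lemma ipForm_self_eq_zero
    (hK : ∀ p : MvPolynomial (Fin 3) ℝ, IntegrableOn (fun x => eval x p) K)
    (hK0 : volume K ≠ 0) {v : Fin 3 → MvPolynomial (Fin 3) ℝ} (hv : ipForm hK v v = 0) :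
    v = 0 := by
  have eval_nonneg (x : Fin 3 → ℝ) : 0 ≤ eval x (v ⬝ᵥ v) := by
    rw [eval_dotProduct]
    exact Finset.sum_nonneg fun i _ => mul_self_nonneg _
  have ae_zero : (fun x => eval x (v ⬝ᵥ v)) =ᵐ[volume.restrict K] 0 :=
    (integral_eq_zero_iff_of_nonneg eval_nonneg (hK _)).mp hv
  have : (ae (volume.restrict K)).NeBot := ae_restrict_neBot.mpr hK0
  funext i
  by_contra hi
  obtain ⟨x, hx0, hxi⟩ := (ae_zero.and (ae_restrict_of_ae (ae_eval_ne_zero hi))).exists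
  simp only [eval_dotProduct, Pi.zero_apply] at hx0
  rw [Finset.sum_eq_zero_iff_of_nonneg fun i _ => mul_self_nonneg _] at hx0
  exact hxi (mul_self_eq_zero.mp (hx0 i (Finset.mem_univ i)))

end Integration

section VectorFields

/-- The space `W = P_k³ + grad 𝒫̃_{k+2}`: it has the same curls as `P_k³` and contains all
curl-free fields of `P_{k+1}³`. -/
noncomputable abbrev PvecGrad (k : ℕ) : Submodule ℝ (Fin 3 → MvPolynomial (Fin 3) ℝ) :=
  Pvec k ⊔ Submodule.map gradLM (homogeneousSubmodule (Fin 3) ℝ (k + 2))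

variable {k : ℕ} {v : Fin 3 → MvPolynomial (Fin 3) ℝ}

lemma mem_Pvec : v ∈ Pvec k ↔ ∀ i, (v i).totalDegree ≤ k := by
  simp only [Pvec, Submodule.mem_pi, Set.mem_univ, mem_restrictTotalDegree, forall_const]

instance finiteDimensional_Pvec : FiniteDimensional ℝ (Pvec k) :=
  Module.Finite.equiv (piConstEquiv (Fin 3) (restrictTotalDegree (Fin 3) ℝ k))

lemma finrank_Pvec : Module.finrank ℝ (Pvec k) = 3 * Nat.choose (k + 3) 3 := by
  rw [Pvec, finrank_pi_const, finrank_restrictTotalDegree, Fintype.card_fin]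

lemma gradLM_apply (p : MvPolynomial (Fin 3) ℝ) (i : Fin 3) : gradLM p i = pderiv i p := rfl

lemma curlLM_apply (v : Fin 3 → MvPolynomial (Fin 3) ℝ) :
    curlLM v = ![pderiv 1 (v 2) - pderiv 2 (v 1), pderiv 2 (v 0) - pderiv 0 (v 2),
      pderiv 0 (v 1) - pderiv 1 (v 0)] := by
  funext i
  fin_cases i <;> rfl

lemma curlLM_eq_zero_iff : curlLM v = 0 ↔ ∀ i j, pderiv i (v j) = pderiv j (v i) := by
  rw [curlLM_apply]
  constructor
  · intro h
    have h₁₂ := sub_eq_zero.mp (congrFun h 0)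
    have h₂₀ := sub_eq_zero.mp (congrFun h 1)
    have h₀₁ := sub_eq_zero.mp (congrFun h 2)
    intro i j
    fin_cases i <;> fin_cases j <;> first | rfl | assumption | (symm; assumption)
  · intro h
    rw [h 1 2, h 2 0, h 0 1]
    simp only [sub_self, Matrix.cons_eq_zero_iff, Matrix.zero_empty, and_self]

lemma curlLM_gradLM (p : MvPolynomial (Fin 3) ℝ) : curlLM (gradLM p) = 0 :=
  curlLM_eq_zero_iff.mpr fun i j => pderiv_comm i j p

lemma map_curlLM_PvecGrad : (PvecGrad k).map curlLM = (Pvec k).map curlLM := by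
  rw [Submodule.map_sup, sup_eq_left, ← Submodule.map_comp]
  rintro _ ⟨p, -, rfl⟩
  rw [LinearMap.comp_apply, curlLM_gradLM]
  exact Submodule.zero_mem _

lemma map_curlLM_Pvec_succ_le : (Pvec (k + 1)).map curlLM ≤ Pvec k := by
  rintro _ ⟨v, hv, rfl⟩
  have totalDegree_le (i j : Fin 3) : (pderiv i (v j)).totalDegree ≤ k :=
    (totalDegree_pderiv_le i (v j)).trans (Nat.sub_le_of_le_add (mem_Pvec.mp hv j))
  have totalDegree_sub_le (i j : Fin 3) :
      (pderiv i (v j) - pderiv j (v i)).totalDegree ≤ k :=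
    (totalDegree_sub _ _).trans (max_le (totalDegree_le i j) (totalDegree_le j i))
  rw [mem_Pvec, curlLM_apply]
  simp [Fin.forall_fin_succ, totalDegree_sub_le]

lemma PvecGrad_le : PvecGrad k ≤ Pvec (k + 1) := by
  refine sup_le (fun v hv => mem_Pvec.mpr fun i => (mem_Pvec.mp hv i).trans k.le_succ) ?_
  rintro _ ⟨p, hp, rfl⟩
  exact mem_Pvec.mpr fun i => (IsHomogeneous.pderiv hp).totalDegree_le

lemma mem_map_gradLM_of_isHomogeneous {n : ℕ} (hv : ∀ i, (v i).IsHomogeneous n)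
    (hcurl : curlLM v = 0) : v ∈ (homogeneousSubmodule (Fin 3) ℝ (n + 1)).map gradLM := by
  have potential_mem : ∑ i, X i * v i ∈ homogeneousSubmodule (Fin 3) ℝ (n + 1) :=
    Submodule.sum_mem _ fun i _ => by
      simpa only [mem_homogeneousSubmodule, add_comm] using (isHomogeneous_X ℝ i).mul (hv i)
  have grad_potential : gradLM (∑ i, X i * v i) = ((n + 1 : ℕ) : ℝ) • v := by
    funext j
    rw [gradLM_apply, pderiv_sum_X_mul_of_pderiv_symm hv (curlLM_eq_zero_iff.mp hcurl),
      Pi.smul_apply, Nat.cast_smul_eq_nsmul]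
  refine ⟨((n + 1 : ℕ) : ℝ)⁻¹ • ∑ i, X i * v i, Submodule.smul_mem _ _ potential_mem, ?_⟩
  rw [map_smul, grad_potential, inv_smul_smul₀ (Nat.cast_ne_zero.mpr n.succ_ne_zero)]

lemma Pvec_succ_inf_ker_curlLM_le : Pvec (k + 1) ⊓ LinearMap.ker curlLM ≤ PvecGrad k := by
  rintro v ⟨hv, hcurl⟩
  let top : Fin 3 → MvPolynomial (Fin 3) ℝ := fun i => homogeneousComponent (k + 1) (v i)
  have lower_mem : v - top ∈ Pvec k :=
    mem_Pvec.mpr fun i => totalDegree_sub_homogeneousComponent_le (mem_Pvec.mp hv i)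
  have curl_top : curlLM top = 0 := curlLM_eq_zero_iff.mpr fun i j => by
    rw [pderiv_homogeneousComponent_succ, pderiv_homogeneousComponent_succ,
      curlLM_eq_zero_iff.mp hcurl i j]
  have top_mem := mem_map_gradLM_of_isHomogeneous
    (fun i => homogeneousComponent_isHomogeneous (k + 1) (v i)) curl_top
  rw [← sub_add_cancel v top]
  exact Submodule.add_mem_sup lower_mem top_mem

lemma mem_inf_orthogonal_ipForm_iff {K : Set (Fin 3 → ℝ)}
    (hK : ∀ p : MvPolynomial (Fin 3) ℝ, IntegrableOn (fun x => eval x p) K)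
    {V N : Submodule ℝ (Fin 3 → MvPolynomial (Fin 3) ℝ)} :
    v ∈ V ⊓ (ipForm hK).orthogonal N ↔ v ∈ V ∧ ∀ w ∈ N, ipK K v w = 0 := by
  simp only [Submodule.mem_inf, LinearMap.BilinForm.mem_orthogonal_iff, ipForm_apply, ipK_comm v]

end VectorFields

theorem stmt8_general (k : ℕ) (K : Set (Fin 3 → ℝ))
    (hK : ∀ p : MvPolynomial (Fin 3) ℝ, IntegrableOn (fun x => eval x p) K)
    (hK0 : volume K ≠ 0) :
    ∃ S₁ S₂ : Submodule ℝ (Fin 3 → MvPolynomial (Fin 3) ℝ),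
      (S₁ : Set (Fin 3 → MvPolynomial (Fin 3) ℝ))
        = {r | r ∈ Pvec k ∧ ∀ v ∈ Pvec (k + 1), ipK K r (curlLM v) = 0} ∧
      (S₂ : Set (Fin 3 → MvPolynomial (Fin 3) ℝ))
        = {v | v ∈ Pvec (k + 1) ∧
            ∀ w ∈ Pvec k ⊔ Submodule.map gradLM (homogeneousSubmodule (Fin 3) ℝ (k + 2)),
              ipK K v w = 0} ∧
      Module.finrank ℝ (Submodule.map curlLM (Pvec k))
        + Module.finrank ℝ S₁ + Module.finrank ℝ S₂
        = 3 * Nat.choose (k + 3) 3 := by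
  refine ⟨Pvec k ⊓ (ipForm hK).orthogonal ((Pvec (k + 1)).map curlLM),
    Pvec (k + 1) ⊓ (ipForm hK).orthogonal (PvecGrad k), ?_, ?_, ?_⟩
  · ext r
    simp only [SetLike.mem_coe, mem_inf_orthogonal_ipForm_iff, Submodule.mem_map,
      forall_exists_index, and_imp, forall_apply_eq_imp_iff₂, Set.mem_ofPred_eq]
  · ext v
    exact mem_inf_orthogonal_ipForm_iff hK
  · rw [← map_curlLM_PvecGrad, ← finrank_Pvec]
    exact finrank_map_add_finrank_inf_orthogonal_map_add (fun _ => ipForm_self_eq_zero hK hK0)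
      map_curlLM_Pvec_succ_le PvecGrad_le Pvec_succ_inf_ker_curlLM_le

/-- The dimensions of `curl(P_k³)`, of the `L²(K)`-orthogonal complement of
`curl(P_{k+1}³)` in `P_k³`, and of the `L²(K)`-orthogonal complement of
`P_k³ ⊕ grad(𝒫̃_{k+2})` in `P_{k+1}³` add up to `3·d_k = dim P_k³`:
the system defining the curl+ projection is square. -/
theorem stmt8 (k : ℕ) (K : Set (Fin 3 → ℝ)) (hKo : IsOpen K) (hKne : K.Nonempty)
    (hKb : Bornology.IsBounded K) :
    ∃ S₁ S₂ : Submodule ℝ (Fin 3 → MvPolynomial (Fin 3) ℝ),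
      (S₁ : Set (Fin 3 → MvPolynomial (Fin 3) ℝ))
        = {r | r ∈ Pvec k ∧ ∀ v ∈ Pvec (k + 1), ipK K r (curlLM v) = 0} ∧
      (S₂ : Set (Fin 3 → MvPolynomial (Fin 3) ℝ))
        = {v | v ∈ Pvec (k + 1) ∧
            ∀ w ∈ Pvec k ⊔ Submodule.map gradLM (homogeneousSubmodule (Fin 3) ℝ (k + 2)),
              ipK K v w = 0} ∧
      Module.finrank ℝ (Submodule.map curlLM (Pvec k))
        + Module.finrank ℝ S₁ + Module.finrank ℝ S₂
        = 3 * Nat.choose (k + 3) 3 :=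
  stmt8_general k K (integrableOn_eval hKb) (hKo.measure_pos volume hKne).ne'
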